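/- arXiv:2006.13293 — 4 statements merged into one kernel-verified Lean document; each statement's English description precedes it below -/
import Mathlib

section
/- For μ-a.e. x ∈ X, the limit lim_{n→∞} ‖A_n(x,·)‖_{L²(Y,ν)} exists (this is the existence of the drift in the abelian case of the multiplicative ergodic theorem, deduced from the pointwise ergodic theorem). -/
open MeasureTheory Filter Real Topology

/-!
Garsia's argument gives the maximal ergodic theorem: if `M` is the maximum of the first `n` Birkhoff
sums of `φ`, including the empty one, then `M - M ∘ T` is at most `φ` where `M > 0` and nonpositive
elsewhere, while its integral vanishes. On a `T`-invariant set where the upper limit of the averages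
exceeds `b`, the mean of `φ` is therefore at least `b`. Hence the upper and lower limits of the
averages are finite and agree almost everywhere, which is Birkhoff's theorem. For the drift, apply
it to `(x, y) ↦ log |g (x, y)|` and the transformation `f × id` of `X × Y`; by Fubini, for almost
every `x` the averages converge at almost every `y`, and bounded convergence in `y` gives
convergence of the `L²(ν)` norms.
-/

section MaximalErgodicTheorem

variable {α : Type*} {T : α → α} {φ : α → ℝ}

lemma partialSups_birkhoffSum_nonneg (n : ℕ) (z : α) : 0 ≤ partialSups (birkhoffSum T φ) n z := by
  simpa using le_partialSups_of_le (birkhoffSum T φ) n.zero_le z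

lemma partialSups_birkhoffSum_le (n : ℕ) (z : α) :
    partialSups (birkhoffSum T φ) n z ≤ max 0 (φ z + partialSups (birkhoffSum T φ) n (T z)) := by
  rw [Pi.partialSups_apply]
  refine partialSups_le _ _ _ fun k hk => ?_
  cases k with
  | zero => simp
  | succ k =>
    rw [birkhoffSum_succ']
    refine le_max_of_le_right ?_
    gcongr
    exact le_partialSups_of_le (birkhoffSum T φ) (by lia) (T z)

lemma exists_partialSups_birkhoffSum_pos_iff {z : α} :
    (∃ n, 0 < partialSups (birkhoffSum T φ) n z) ↔ ∃ n, 0 < birkhoffSum T φ n z := by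
  refine ⟨fun ⟨n, hn⟩ => ?_, fun ⟨n, hn⟩ => ⟨n, hn.trans_le (le_partialSups (birkhoffSum T φ) n z)⟩⟩
  by_contra! h
  rw [Pi.partialSups_apply] at hn
  exact hn.not_ge (partialSups_le _ _ _ fun k _ => h k)

variable [MeasurableSpace α] {μ : Measure α}

lemma integrable_birkhoffSum {E : Type*} [NormedAddCommGroup E] {ψ : α → E}
    (hT : MeasurePreserving T μ μ) (hψ : Integrable ψ μ) (n : ℕ) :
    Integrable (birkhoffSum T ψ n) μ :=
  integrable_finsetSum _ fun k _ => (hT.iterate k).integrable_comp_of_integrable hψ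

lemma integrable_partialSups {β : Type*} [NormedAddCommGroup β] [Lattice β] [HasSolidNorm β]
    [IsOrderedAddMonoid β] {u : ℕ → α → β} (hu : ∀ n, Integrable (u n) μ) (n : ℕ) :
    Integrable (partialSups u n) μ := by
  induction n with
  | zero => simpa using hu 0
  | succ n ih => simpa only [partialSups_add_one] using ih.sup (hu (n + 1))

lemma integral_sub_comp_eq_zero {E : Type*} [NormedAddCommGroup E] [NormedSpace ℝ E] {ψ : α → E}
    (hT : MeasurePreserving T μ μ) (hψ : Integrable ψ μ) : ∫ z, (ψ z - ψ (T z)) ∂μ = 0 := by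
  have hcomp : ∫ z, ψ (T z) ∂μ = ∫ z, ψ z ∂μ := by
    have hψ' : AEStronglyMeasurable ψ (μ.map T) := hT.map_eq.symm ▸ hψ.aestronglyMeasurable
    rw [← integral_map hT.aemeasurable hψ', hT.map_eq]
  exact (integral_sub hψ (hT.integrable_comp_of_integrable hψ)).trans (sub_eq_zero.2 hcomp.symm)

lemma setIntegral_partialSups_birkhoffSum_pos_nonneg (hT : MeasurePreserving T μ μ)
    (hφ : Integrable φ μ) (n : ℕ) :
    0 ≤ ∫ z in {z | 0 < partialSups (birkhoffSum T φ) n z}, φ z ∂μ := by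
  set M := partialSups (birkhoffSum T φ) n
  have hMi : Integrable M μ := integrable_partialSups (integrable_birkhoffSum hT hφ) n
  have hs : NullMeasurableSet {z | 0 < M z} μ :=
    nullMeasurableSet_lt aemeasurable_const hMi.aemeasurable
  have hle (z : α) : M z - M (T z) ≤ {z | 0 < M z}.indicator φ z := by
    have hMT : 0 ≤ M (T z) := partialSups_birkhoffSum_nonneg n (T z)
    have hrec : M z ≤ max 0 (φ z + M (T z)) := partialSups_birkhoffSum_le n z
    by_cases hz : 0 < M z
    · rw [Set.indicator_of_mem (show z ∈ {z | 0 < M z} from hz)]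
      have := (le_max_iff.1 hrec).resolve_left hz.not_ge
      linarith
    · rw [Set.indicator_of_notMem (show z ∉ {z | 0 < M z} from hz)]
      linarith
  calc 0 = ∫ z, (M z - M (T z)) ∂μ := (integral_sub_comp_eq_zero hT hMi).symm
    _ ≤ ∫ z, {z | 0 < M z}.indicator φ z ∂μ :=
        integral_mono (hMi.sub (hT.integrable_comp_of_integrable hMi)) (hφ.indicator₀ hs) hle
    _ = ∫ z in {z | 0 < M z}, φ z ∂μ := integral_indicator₀ hs

theorem setIntegral_exists_birkhoffSum_pos_nonneg (hT : MeasurePreserving T μ μ)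
    (hφ : Integrable φ μ) : 0 ≤ ∫ z in {z | ∃ n, 0 < birkhoffSum T φ n z}, φ z ∂μ := by
  set s : ℕ → Set α := fun n => {z | 0 < partialSups (birkhoffSum T φ) n z}
  have hs (n : ℕ) : NullMeasurableSet (s n) μ := nullMeasurableSet_lt aemeasurable_const
    (integrable_partialSups (integrable_birkhoffSum hT hφ) n).aemeasurable
  have hmono : Monotone s := fun m n hmn z hz =>
    lt_of_lt_of_le hz ((partialSups (birkhoffSum T φ)).monotone hmn z)
  have hunion : ⋃ n, s n = {z | ∃ n, 0 < birkhoffSum T φ n z} := by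
    ext z
    simpa [s] using exists_partialSups_birkhoffSum_pos_iff
  rw [← hunion]
  exact ge_of_tendsto' (tendsto_setIntegral_of_monotone₀ hs hmono hφ.integrableOn)
    (setIntegral_partialSups_birkhoffSum_pos_nonneg hT hφ)

end MaximalErgodicTheorem

section PointwiseErgodicTheorem

lemma limsup_coe_mul_add_le {ι : Type*} {l : Filter ι} {r s u : ι → ℝ}
    (hr : Tendsto r l (𝓝 1)) (hs : Tendsto s l (𝓝 0)) :
    limsup (fun i => ((r i * u i + s i : ℝ) : EReal)) l ≤ limsup (fun i => (u i : EReal)) l := by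
  refine EReal.le_of_forall_lt_iff_le.1 fun c hc => ?_
  obtain ⟨d, hd, hdc⟩ := EReal.lt_iff_exists_real_btwn.1 hc
  have hlim : Tendsto (fun i => r i * d + s i) l (𝓝 d) := by
    simpa using (hr.mul_const d).add hs
  refine limsup_le_of_le (by isBoundedDefault) ?_
  filter_upwards [eventually_lt_of_limsup_lt hd, hr.eventually_const_lt one_pos,
    hlim.eventually_lt_const (EReal.coe_lt_coe_iff.1 hdc)] with i hu hri hi
  have hu' : u i ≤ d := (EReal.coe_lt_coe_iff.1 hu).le
  exact EReal.coe_le_coe (le_trans (by gcongr) hi.le)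

variable {α : Type*} {T : α → α} {φ : α → ℝ}

/-- The upper limit of the Birkhoff averages of `φ` along the orbit of `z`. It is taken in `EReal`
so that it makes sense before the averages are known to be bounded; the lower limit is recovered as
`-upperBirkhoffAverage T (-φ)`. -/
noncomputable def upperBirkhoffAverage (T : α → α) (φ : α → ℝ) (z : α) : EReal :=
  limsup (fun n => ((birkhoffAverage ℝ T φ n z : ℝ) : EReal)) atTop

lemma neg_upperBirkhoffAverage_neg (z : α) :
    -upperBirkhoffAverage T (-φ) z =
      liminf (fun n => ((birkhoffAverage ℝ T φ n z : ℝ) : EReal)) atTop := by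
  rw [upperBirkhoffAverage, ← EReal.liminf_neg]
  refine liminf_congr (.of_forall fun n => ?_)
  simp [birkhoffAverage_neg]

lemma birkhoffAverage_succ_eq (n : ℕ) (z : α) :
    birkhoffAverage ℝ T φ (n + 1) z =
      n / (n + 1) * birkhoffAverage ℝ T φ n (T z) + φ z / (n + 1) := by
  rcases eq_or_ne n 0 with rfl | hn
  · simp
  · simp only [birkhoffAverage, birkhoffSum_succ', smul_eq_mul]
    push_cast
    field_simp
    ring

lemma upperBirkhoffAverage_apply (T : α → α) (φ : α → ℝ) (z : α) :
    upperBirkhoffAverage T φ (T z) = upperBirkhoffAverage T φ z := by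
  have hr : Tendsto (fun n : ℕ => (n / (n + 1) : ℝ)) atTop (𝓝 1) :=
    tendsto_natCast_div_add_atTop 1
  have hs : Tendsto (fun n : ℕ => φ z / (n + 1 : ℝ)) atTop (𝓝 0) := by
    simpa [div_eq_mul_inv] using tendsto_one_div_add_atTop_nhds_zero_nat.const_mul (φ z)
  rw [upperBirkhoffAverage, upperBirkhoffAverage,
    ← limsup_nat_add (fun n => ((birkhoffAverage ℝ T φ n z : ℝ) : EReal)) 1]
  refine le_antisymm ?_ ?_
  · convert! limsup_coe_mul_add_le (u := fun n => birkhoffAverage ℝ T φ (n + 1) z)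
      (by simpa using hr.inv₀ one_ne_zero)
      (by simpa using ((hr.inv₀ one_ne_zero).mul hs).neg) using 4 with n
    rcases eq_or_ne n 0 with rfl | hn
    · simp
    · rw [birkhoffAverage_succ_eq]
      field_simp
      ring
  · simpa only [birkhoffAverage_succ_eq] using limsup_coe_mul_add_le hr hs

variable [MeasurableSpace α] {μ : Measure α}

lemma measurable_upperBirkhoffAverage (hT : Measurable T) (hφ : Measurable φ) :
    Measurable (upperBirkhoffAverage T φ) := by
  refine Measurable.limsup fun n => Measurable.coe_real_ereal ?_
  exact (Finset.measurable_sum _ fun k _ => hφ.comp (hT.iterate k)).const_smul (n : ℝ)⁻¹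

variable [IsFiniteMeasure μ]

lemma mul_measureReal_le_setIntegral_of_lt_upperBirkhoffAverage (hT : MeasurePreserving T μ μ)
    (hφ : Integrable φ μ) {s : Set α} (hs : MeasurableSet s) (hTs : T ⁻¹' s = s) {b : ℝ}
    (hb : ∀ z ∈ s, b < upperBirkhoffAverage T φ z) : b * μ.real s ≤ ∫ z in s, φ z ∂μ := by
  have hTμ : MeasurePreserving T (μ.restrict s) (μ.restrict s) := by
    simpa only [hTs] using hT.restrict_preimage hs
  have hpos : {z | ∃ n, 0 < birkhoffSum T (φ - fun _ => b) n z} =ᵐ[μ.restrict s] Set.univ := by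
    refine eventuallyEq_univ.2 ?_
    filter_upwards [ae_restrict_mem hs] with z hz
    obtain ⟨n, hbn, hn⟩ := ((frequently_lt_of_lt_limsup (by isBoundedDefault)
      (hb z hz)).and_eventually (eventually_gt_atTop 0)).exists
    have hn' : (0 : ℝ) < n := by exact_mod_cast hn
    have hbn' : b < (n : ℝ)⁻¹ * birkhoffSum T φ n z := EReal.coe_lt_coe_iff.1 hbn
    rw [lt_inv_mul_iff₀ hn'] at hbn'
    refine ⟨n, ?_⟩
    rw [birkhoffSum_sub]
    simpa [birkhoffSum] using hbn'
  have hmax := setIntegral_exists_birkhoffSum_pos_nonneg hTμ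
    (hφ.restrict.sub (integrable_const b))
  rw [setIntegral_congr_set hpos, setIntegral_univ, integral_sub' hφ.restrict (integrable_const b),
    integral_const, measureReal_restrict_apply_univ, smul_eq_mul] at hmax
  linarith

lemma ae_upperBirkhoffAverage_lt_top (hT : MeasurePreserving T μ μ) (hφm : Measurable φ)
    (hφ : Integrable φ μ) : ∀ᵐ z ∂μ, upperBirkhoffAverage T φ z < ⊤ := by
  set s : Set α := {z | upperBirkhoffAverage T φ z = ⊤}
  have hs : MeasurableSet s :=
    measurable_upperBirkhoffAverage hT.measurable hφm (measurableSet_singleton ⊤)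
  have hTs : T ⁻¹' s = s := by
    ext z
    simp [s, upperBirkhoffAverage_apply]
  have hle (b : ℝ) : b * μ.real s ≤ ∫ z in s, φ z ∂μ :=
    mul_measureReal_le_setIntegral_of_lt_upperBirkhoffAverage hT hφ hs hTs fun z hz =>
      (EReal.coe_lt_top b).trans_eq (Eq.symm hz)
  have hzero : μ.real s = 0 := by
    by_contra hne
    have := hle ((∫ z in s, φ z ∂μ + 1) / μ.real s)
    rw [div_mul_cancel₀ _ hne] at this
    linarith
  filter_upwards [measure_eq_zero_iff_ae_notMem.1 ((measureReal_eq_zero_iff).1 hzero)] with z hz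
  exact lt_top_iff_ne_top.2 hz

lemma measure_lt_upperBirkhoffAverage_and_neg_lt_eq_zero (hT : MeasurePreserving T μ μ)
    (hφm : Measurable φ) (hφ : Integrable φ μ) {a b : ℝ} (hab : a < b) :
    μ {z | b < upperBirkhoffAverage T φ z ∧ -upperBirkhoffAverage T (-φ) z < a} = 0 := by
  set s : Set α := {z | b < upperBirkhoffAverage T φ z ∧ -upperBirkhoffAverage T (-φ) z < a}
  have hs : MeasurableSet s :=
    (measurableSet_lt measurable_const (measurable_upperBirkhoffAverage hT.measurable hφm)).inter
      (measurableSet_lt (measurable_upperBirkhoffAverage hT.measurable hφm.neg).neg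
        measurable_const)
  have hTs : T ⁻¹' s = s := by
    ext z
    simp [s, upperBirkhoffAverage_apply]
  have hb : b * μ.real s ≤ ∫ z in s, φ z ∂μ :=
    mul_measureReal_le_setIntegral_of_lt_upperBirkhoffAverage hT hφ hs hTs fun z hz => hz.1
  have ha : -a * μ.real s ≤ ∫ z in s, (-φ) z ∂μ :=
    mul_measureReal_le_setIntegral_of_lt_upperBirkhoffAverage hT hφ.neg hs hTs fun z hz => by
      simpa using EReal.neg_lt_comm.1 hz.2
  rw [integral_neg'] at ha
  have hmul : (b - a) * μ.real s ≤ 0 := by linarith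
  exact (measureReal_eq_zero_iff).1
    (le_antisymm (nonpos_of_mul_nonpos_right hmul (sub_pos.2 hab)) measureReal_nonneg)

lemma ae_upperBirkhoffAverage_le_neg (hT : MeasurePreserving T μ μ) (hφm : Measurable φ)
    (hφ : Integrable φ μ) :
    ∀ᵐ z ∂μ, upperBirkhoffAverage T φ z ≤ -upperBirkhoffAverage T (-φ) z := by
  have hosc : ∀ᵐ z ∂μ, ∀ a b : ℚ, a < b →
      ¬((b : ℝ) < upperBirkhoffAverage T φ z ∧ -upperBirkhoffAverage T (-φ) z < (a : ℝ)) := by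
    simp_rw [ae_all_iff]
    intro a b hab
    exact measure_eq_zero_iff_ae_notMem.1
      (measure_lt_upperBirkhoffAverage_and_neg_lt_eq_zero hT hφm hφ (Rat.cast_lt.2 hab))
  filter_upwards [hosc] with z hz
  by_contra! hlt
  obtain ⟨a, ha, ha'⟩ := EReal.lt_iff_exists_rat_btwn.1 hlt
  obtain ⟨b, hab, hb⟩ := EReal.lt_iff_exists_rat_btwn.1 ha'
  exact hz a b (Rat.cast_lt.1 (EReal.coe_lt_coe_iff.1 hab)) ⟨hb, ha⟩

theorem ae_exists_tendsto_birkhoffAverage (hT : MeasurePreserving T μ μ) (hφ : Integrable φ μ) :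
    ∀ᵐ z ∂μ, ∃ L : ℝ, Tendsto (fun n => birkhoffAverage ℝ T φ n z) atTop (𝓝 L) := by
  wlog hφm : Measurable φ generalizing φ
  · have hmk := hφ.aestronglyMeasurable.ae_eq_mk
    have havg := ae_all_iff.2
      (hT.quasiMeasurePreserving.birkhoffAverage_ae_eq_of_ae_eq ℝ hmk)
    filter_upwards [havg, this (hφ.congr hmk)
      hφ.aestronglyMeasurable.stronglyMeasurable_mk.measurable] with z hz hlim
    simpa only [hz] using hlim
  filter_upwards [ae_upperBirkhoffAverage_le_neg hT hφm hφ,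
    ae_upperBirkhoffAverage_lt_top hT hφm hφ,
    ae_upperBirkhoffAverage_lt_top hT hφm.neg hφ.neg] with z hle htop hbot
  have hne_bot : upperBirkhoffAverage T φ z ≠ ⊥ := by
    have hinf : ⊥ < -upperBirkhoffAverage T (-φ) z := by simpa [bot_lt_iff_ne_bot] using hbot.ne
    rw [neg_upperBirkhoffAverage_neg] at hinf
    exact (hinf.trans_le liminf_le_limsup).ne'
  refine ⟨(upperBirkhoffAverage T φ z).toReal, EReal.tendsto_coe.1 ?_⟩
  rw [EReal.coe_toReal htop.ne hne_bot]
  exact tendsto_of_le_liminf_of_limsup_le (hle.trans_eq (neg_upperBirkhoffAverage_neg z)) le_rfl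

end PointwiseErgodicTheorem

section Drift

lemma norm_birkhoffAverage_le {α E : Type*} [NormedAddCommGroup E] [NormedSpace ℝ E] {T : α → α}
    {φ : α → E} {C : ℝ} {z : α} (hC : ∀ k, ‖φ (T^[k] z)‖ ≤ C) (n : ℕ) :
    ‖birkhoffAverage ℝ T φ n z‖ ≤ C := by
  rcases eq_or_ne n 0 with rfl | hn
  · simpa using (norm_nonneg _).trans (hC 0)
  · rw [birkhoffAverage, norm_smul, norm_inv, RCLike.norm_natCast,
      inv_mul_le_iff₀ (by positivity)]
    simpa [birkhoffSum] using norm_sum_le_of_le (Finset.range n) fun k _ => hC k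

lemma abs_log_le_log {r R : ℝ} (hR : 0 < R) (hinv : R⁻¹ ≤ r) (hr : r ≤ R) :
    |Real.log r| ≤ Real.log R := by
  have hpos : 0 < r := (inv_pos.2 hR).trans_le hinv
  rw [abs_le, ← Real.log_inv]
  exact ⟨Real.log_le_log (inv_pos.2 hR) hinv, Real.log_le_log hpos hr⟩

lemma birkhoffAverage_prodMap_id {X Y : Type*} (f : X → X) (φ : X × Y → ℝ) (n : ℕ) (x : X) (y : Y) :
    birkhoffAverage ℝ (Prod.map f id) φ n (x, y) =
      1 / (n : ℝ) * ∑ k ∈ Finset.range n, φ (f^[k] x, y) := by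
  simp [birkhoffAverage, birkhoffSum, Prod.map_iterate]

variable {X Y : Type*} [MeasurableSpace X] [MeasurableSpace Y] {μ : Measure X} {ν : Measure Y}
  [IsFiniteMeasure μ] [IsFiniteMeasure ν]

theorem ae_exists_tendsto_integral_comp_birkhoffAverage {E : Type*} [NormedAddCommGroup E]
    [NormedSpace ℝ E] {T : X × Y → X × Y} (hT : MeasurePreserving T (μ.prod ν) (μ.prod ν))
    {φ : X × Y → ℝ} (hφ : AEStronglyMeasurable φ (μ.prod ν)) {C : ℝ}
    (hC : ∀ᵐ p ∂(μ.prod ν), ‖φ p‖ ≤ C) {F : ℝ → E} (hF : Continuous F) :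
    ∀ᵐ x ∂μ, ∃ L : E,
      Tendsto (fun n => ∫ y, F (birkhoffAverage ℝ T φ n (x, y)) ∂ν) atTop (𝓝 L) := by
  have hφi : Integrable φ (μ.prod ν) := .of_bound hφ C hC
  have hmeas : ∀ᵐ x ∂μ, ∀ n,
      AEStronglyMeasurable (fun y => birkhoffAverage ℝ T φ n (x, y)) ν :=
    ae_all_iff.2 fun n => AEStronglyMeasurable.prodMk_left
      ((integrable_birkhoffSum hT hφi n).aestronglyMeasurable.const_smul (n : ℝ)⁻¹)
  have horbit : ∀ᵐ p ∂(μ.prod ν), ∀ k, ‖φ (T^[k] p)‖ ≤ C :=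
    ae_all_iff.2 fun k => (hT.iterate k).quasiMeasurePreserving.ae hC
  obtain ⟨K, hK⟩ := (isCompact_closedBall (0 : ℝ) C).exists_bound_of_continuousOn hF.continuousOn
  filter_upwards [hmeas, Measure.ae_ae_of_ae_prod horbit,
    Measure.ae_ae_of_ae_prod (ae_exists_tendsto_birkhoffAverage hT hφi)] with x hxm hxC hxlim
  refine ⟨∫ y, F (limUnder atTop fun n => birkhoffAverage ℝ T φ n (x, y)) ∂ν,
    tendsto_integral_of_dominated_convergence (fun _ => K)
      (fun n => hF.comp_aestronglyMeasurable (hxm n)) (integrable_const K) (fun n => ?_) ?_⟩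
  · filter_upwards [hxC] with y hy
    exact hK _ (mem_closedBall_zero_iff.2 (norm_birkhoffAverage_le hy n))
  · filter_upwards [hxlim] with y hy
    exact (hF.tendsto _).comp (tendsto_nhds_limUnder hy)

theorem abelian_MET_drift_exists_general {f : X → X} (hf : MeasurePreserving f μ μ)
    {R : ℝ} (hR : 0 < R) {g : X × Y → ℝ} (hg : AEMeasurable g (μ.prod ν))
    (hbound : ∀ᵐ p ∂(μ.prod ν), R⁻¹ ≤ |g p| ∧ |g p| ≤ R) :
    ∀ᵐ x ∂μ, ∃ L : ℝ,
      Tendsto (fun n : ℕ =>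
          (∫ y, ((1 / (n : ℝ)) * ∑ k ∈ Finset.range n, Real.log |g (f^[k] x, y)|) ^ 2 ∂ν)
            ^ ((1 : ℝ) / 2))
        atTop (𝓝 L) := by
  have hT : MeasurePreserving (Prod.map f id) (μ.prod ν) (μ.prod ν) :=
    hf.prod (MeasurePreserving.id ν)
  have hlog : AEStronglyMeasurable (fun p => Real.log |g p|) (μ.prod ν) :=
    (Real.measurable_log.comp_aemeasurable hg.abs).aestronglyMeasurable
  have hC : ∀ᵐ p ∂(μ.prod ν), ‖Real.log |g p|‖ ≤ Real.log R :=
    hbound.mono fun p hp => abs_log_le_log hR hp.1 hp.2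
  filter_upwards [ae_exists_tendsto_integral_comp_birkhoffAverage hT hlog hC
    (continuous_pow 2)] with x ⟨L, hL⟩
  simp only [birkhoffAverage_prodMap_id] at hL
  exact ⟨L ^ ((1 : ℝ) / 2), hL.rpow_const (Or.inr (by norm_num))⟩

end Drift

/-- abelian MET, existence of the drift: for μ-a.e. x the limit of the
L²(Y,ν)-norms of the ergodic averages A_n(x,·) exists. -/
theorem abelian_MET_drift_exists
    {X Y : Type*} [MeasurableSpace X] [MeasurableSpace Y]
    [StandardBorelSpace X] [StandardBorelSpace Y]
    (μ : Measure X) (ν : Measure Y)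
    [IsProbabilityMeasure μ] [IsProbabilityMeasure ν]
    (f : X → X) (hf : Ergodic f μ)
    (R : ℝ) (hR : 1 < R)
    (g : X × Y → ℝ) (hg : Measurable g)
    (hbound : ∀ᵐ p ∂(μ.prod ν), R⁻¹ ≤ |g p| ∧ |g p| ≤ R) :
    ∀ᵐ x ∂μ, ∃ L : ℝ,
      Tendsto (fun n : ℕ =>
          (∫ y, ((1 / (n : ℝ)) * ∑ k ∈ Finset.range n, Real.log |g (f^[k] x, y)|) ^ 2 ∂ν)
            ^ ((1 : ℝ) / 2))
        atTop (𝓝 L) :=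
  abelian_MET_drift_exists_general hf.toMeasurePreserving (one_pos.trans hR) hg.aemeasurable hbound
end

section
/- There exist standard probability spaces (X,μ) and (Y,ν), an invertible ergodic measure-preserving transformation f : X → X, and a measurable function g : X × Y → ℝ taking only the values 1 and 2, such that for μ-a.e. x ∈ X: (i) (1/n) ∑_{k=0}^{n-1} log g(f^k x, ·) converges in L²(Y,ν) to the constant function (log 2)/2, yet (ii) lim_{n→∞} ( ∫_Y ∏_{k=0}^{n-1} g(f^k x, y)² dν(y) )^{1/(2n)} = 2. In particular, for ξ = 1_Y one has lim_n ‖c(n,x)ξ‖₂^{1/n} = 2 > √2 = lim_n ‖Λ(x)ⁿξ‖₂^{1/n}, where c(n,x)(y) = ∏_{k=0}^{n-1} g(f^k x, y) and Λ(x) = exp((log 2)/2) = √2 is the limit operator; so the strict inequality liminf_n ‖c(n,x)ξ‖₂^{1/n} > lim_n ‖Λ(x)ⁿξ‖₂^{1/n} can occur for a uniformly bounded L^∞(Y,ν)-valued cocycle. -/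
open MeasureTheory Filter Real Topology

/-!
The base is the odometer `x ↦ 1 + x` on the `2`-adic integers with Haar measure. A point of the
fibre is a pair `(s, y)`, a scale `s` of geometric law and an independent Haar-random phase `y`, and
`g (x, (s, y))` is `2` or `1` according to whether the `s`-th binary digit of `x + y` is `0` or `1`.

Adding `2 ^ s` flips the `s`-th digit, so along every orbit the sequence `log g - (log 2) / 2`
changes sign under a shift by `2 ^ s`. Its averages therefore tend to `0` for every `(s, y)`, hence
in `L²` by bounded convergence. On the other hand, if `n ≤ 2 ^ s` and `x + y` vanishes modulo
`2 ^ (s + 1)`, then the `s`-th digit of `k + x + y` is `0` for all `k < n` and the cocycle equals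
`2 ^ n`. Taking `2 ^ s` comparable to `n`, such pairs have probability at least `1 / (16 n²)`, and a
polynomial factor disappears under `n`-th roots.
-/

section Averages

lemma periodic_sum_range_of_antiperiodic {G : Type*} [AddCommGroup G] {a : ℕ → G} {h : ℕ}
    (ha : Function.Antiperiodic a h) :
    Function.Periodic (fun n => ∑ k ∈ Finset.range n, a k) (2 * h) := by
  have hshift (n : ℕ) :
      ∑ k ∈ Finset.range (n + h), a k =
        ∑ k ∈ Finset.range h, a k - ∑ k ∈ Finset.range n, a k := by
    have hneg (k : ℕ) : a (h + k) = -a k := by rw [add_comm, ha k]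
    simp only [add_comm n h, Finset.sum_range_add, hneg, Finset.sum_neg_distrib, sub_eq_add_neg]
  intro n
  simp only [two_mul, ← add_assoc, hshift, sub_sub_cancel]

lemma finite_range_of_periodic {α : Type*} {u : ℕ → α} {h : ℕ} (hh : 0 < h)
    (hu : Function.Periodic u h) : (Set.range u).Finite := by
  refine ((Set.finite_Iio h).image u).subset ?_
  rintro _ ⟨n, rfl⟩
  exact ⟨n % h, Nat.mod_lt n hh, hu.map_mod_nat n⟩

variable {E : Type*} [NormedAddCommGroup E] [NormedSpace ℝ E]

lemma norm_one_div_smul_sum_range_le {a : ℕ → E} {C : ℝ} (ha : ∀ k, ‖a k‖ ≤ C) (n : ℕ) :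
    ‖(1 / (n : ℝ)) • ∑ k ∈ Finset.range n, a k‖ ≤ C := by
  have hsum : ‖∑ k ∈ Finset.range n, a k‖ ≤ n * C := by
    simpa using norm_sum_le_of_le (Finset.range n) fun k _ => ha k
  have hC : 0 ≤ C := (norm_nonneg _).trans (ha 0)
  rw [norm_smul, norm_div, norm_one, Real.norm_natCast, one_div_mul_eq_div]
  exact div_le_of_le_mul₀ n.cast_nonneg hC (by rwa [mul_comm])

lemma tendsto_average_zero_of_antiperiodic {a : ℕ → E} {h : ℕ} (hh : 0 < h)
    (ha : Function.Antiperiodic a h) :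
    Tendsto (fun n : ℕ => (1 / (n : ℝ)) • ∑ k ∈ Finset.range n, a k) atTop (𝓝 0) := by
  obtain ⟨C, hC⟩ := (finite_range_of_periodic (Nat.mul_pos two_pos hh)
    (periodic_sum_range_of_antiperiodic ha)).isBounded.exists_norm_le
  exact tendsto_one_div_atTop_nhds_zero_nat.zero_smul_isBoundedUnder_le
    (isBoundedUnder_of ⟨C, fun n => hC _ ⟨n, rfl⟩⟩)

lemma tendsto_average_of_add_shift_eq {a : ℕ → E} {h : ℕ} {c : E} (hh : 0 < h)
    (ha : ∀ k, a (k + h) + a k = c) :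
    Tendsto (fun n : ℕ => (1 / (n : ℝ)) • ∑ k ∈ Finset.range n, a k) atTop
      (𝓝 ((1 / 2 : ℝ) • c)) := by
  have hanti : Function.Antiperiodic (fun k => a k - (1 / 2 : ℝ) • c) h := by
    intro k
    simp only [← ha k]
    module
  have hlim := (tendsto_average_zero_of_antiperiodic hh hanti).add_const ((1 / 2 : ℝ) • c)
  rw [zero_add] at hlim
  refine hlim.congr' ?_
  filter_upwards [eventually_ne_atTop 0] with n hn
  rw [Finset.sum_sub_distrib, Finset.sum_const, Finset.card_range, ← Nat.cast_smul_eq_nsmul ℝ,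
    smul_sub, smul_smul, one_div_mul_cancel (Nat.cast_ne_zero.mpr hn), one_smul, sub_add_cancel]

end Averages

section Roots

lemma tendsto_div_pow_rpow_one_div {c : ℝ} (hc : 0 < c) (p : ℕ) :
    Tendsto (fun n : ℕ => (c / (n : ℝ) ^ p) ^ (1 / (n : ℝ))) atTop (𝓝 1) := by
  have hconst : Tendsto (fun n : ℕ => c ^ (1 / (n : ℝ))) atTop (𝓝 1) := by
    simpa using tendsto_const_nhds.rpow (tendsto_one_div_atTop_nhds_zero_nat (𝕜 := ℝ))
      (Or.inl hc.ne')
  have hroot : Tendsto (fun n : ℕ => (n : ℝ) ^ (1 / (n : ℝ))) atTop (𝓝 1) :=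
    tendsto_rpow_div.comp tendsto_natCast_atTop_atTop
  have hlim := hconst.div (hroot.pow p) (by simp)
  rw [one_pow, div_one] at hlim
  refine hlim.congr fun n => ?_
  rw [Pi.div_apply, Real.div_rpow hc.le (by positivity), Real.rpow_pow_comm n.cast_nonneg]

lemma tendsto_rpow_one_div_of_div_pow_le {u : ℕ → ℝ} {c : ℝ} (hc : 0 < c) (p : ℕ)
    (hlow : ∀ᶠ n : ℕ in atTop, c / (n : ℝ) ^ p ≤ u n) (hup : ∀ᶠ n in atTop, u n ≤ 1) :
    Tendsto (fun n : ℕ => u n ^ (1 / (n : ℝ))) atTop (𝓝 1) := by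
  refine tendsto_of_tendsto_of_tendsto_of_le_of_le' (tendsto_div_pow_rpow_one_div hc p)
    tendsto_const_nhds ?_ ?_
  · filter_upwards [hlow] with n hn
    exact Real.rpow_le_rpow (by positivity) hn (by positivity)
  · filter_upwards [hlow, hup] with n hn hn'
    exact Real.rpow_le_one (le_trans (by positivity) hn) hn' (by positivity)

lemma tendsto_rpow_one_div_of_mul_pow_le {I w : ℕ → ℝ} {b : ℝ} (hb : 0 ≤ b) (hw : ∀ n, 0 ≤ w n)
    (hw_root : Tendsto (fun n : ℕ => w n ^ (1 / (n : ℝ))) atTop (𝓝 1))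
    (hlow : ∀ n, w n * b ^ n ≤ I n) (hup : ∀ n, I n ≤ b ^ n) :
    Tendsto (fun n : ℕ => I n ^ (1 / (n : ℝ))) atTop (𝓝 b) := by
  have hpow {n : ℕ} (hn : n ≠ 0) : (b ^ n) ^ (1 / (n : ℝ)) = b := by
    rw [one_div, Real.pow_rpow_inv_natCast hb hn]
  have hlim := hw_root.mul_const b
  rw [one_mul] at hlim
  refine tendsto_of_tendsto_of_tendsto_of_le_of_le' hlim tendsto_const_nhds ?_ ?_
  · filter_upwards [eventually_ne_atTop 0] with n hn
    calc w n ^ (1 / (n : ℝ)) * b = (w n * b ^ n) ^ (1 / (n : ℝ)) := by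
          rw [Real.mul_rpow (hw n) (by positivity), hpow hn]
      _ ≤ I n ^ (1 / (n : ℝ)) :=
          Real.rpow_le_rpow (mul_nonneg (hw n) (by positivity)) (hlow n) (by positivity)
  · filter_upwards [eventually_ne_atTop 0] with n hn
    have hI : 0 ≤ I n := (mul_nonneg (hw n) (by positivity)).trans (hlow n)
    exact (Real.rpow_le_rpow hI (hup n) (by positivity)).trans_eq (hpow hn)

end Roots

section Integrals

variable {Y : Type*} [MeasurableSpace Y] {ν : Measure Y}

lemma tendsto_integral_sq_sub_of_bounded [IsFiniteMeasure ν] {F : ℕ → Y → ℝ} {C ℓ : ℝ}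
    (hF : ∀ n, AEStronglyMeasurable (F n) ν) (hbound : ∀ n y, ‖F n y‖ ≤ C)
    (hlim : ∀ᵐ y ∂ν, Tendsto (fun n => F n y) atTop (𝓝 ℓ)) :
    Tendsto (fun n => ∫ y, (F n y - ℓ) ^ 2 ∂ν) atTop (𝓝 0) := by
  have hdom (n : ℕ) : ∀ᵐ y ∂ν, ‖(F n y - ℓ) ^ 2‖ ≤ (C + ‖ℓ‖) ^ 2 := by
    refine Eventually.of_forall fun y => ?_
    rw [norm_pow]
    gcongr
    exact (norm_sub_le _ _).trans (by gcongr; exact hbound n y)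
  have hpointwise : ∀ᵐ y ∂ν, Tendsto (fun n => (F n y - ℓ) ^ 2) atTop (𝓝 0) := by
    filter_upwards [hlim] with y hy
    simpa using (hy.sub_const ℓ).pow 2
  simpa using tendsto_integral_of_dominated_convergence (fun _ => (C + ‖ℓ‖) ^ 2)
    (fun n => ((hF n).sub aestronglyMeasurable_const).pow 2) (integrable_const _) hdom hpointwise

lemma tendsto_integral_prod_rpow_one_div [IsProbabilityMeasure ν] {φ : ℕ → Y → ℝ} {b : ℝ}
    {A : ℕ → Set Y} (hφ : ∀ k, Measurable (φ k)) (hφ_nonneg : ∀ k y, 0 ≤ φ k y)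
    (hφ_le : ∀ k y, φ k y ≤ b) (hA : ∀ n, MeasurableSet (A n))
    (hφA : ∀ n, ∀ y ∈ A n, ∀ k < n, φ k y = b)
    (hA_root : Tendsto (fun n : ℕ => ν.real (A n) ^ (1 / (n : ℝ))) atTop (𝓝 1)) :
    Tendsto (fun n : ℕ => (∫ y, ∏ k ∈ Finset.range n, φ k y ∂ν) ^ (1 / (n : ℝ)))
      atTop (𝓝 b) := by
  have hprod_nonneg (n : ℕ) (y : Y) : 0 ≤ ∏ k ∈ Finset.range n, φ k y :=
    Finset.prod_nonneg fun k _ => hφ_nonneg k y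
  have hprod_le (n : ℕ) (y : Y) : ∏ k ∈ Finset.range n, φ k y ≤ b ^ n := by
    simpa using Finset.prod_le_prod (s := Finset.range n) (fun k _ => hφ_nonneg k y)
      fun k _ => hφ_le k y
  have hint (n : ℕ) : Integrable (fun y => ∏ k ∈ Finset.range n, φ k y) ν :=
    .of_bound (Finset.measurable_fun_prod _ fun k _ => hφ k).aestronglyMeasurable (b ^ n)
      (.of_forall fun y => by
        rw [Real.norm_of_nonneg (hprod_nonneg n y)]
        exact hprod_le n y)
  obtain ⟨y₀⟩ : Nonempty Y := nonempty_of_isProbabilityMeasure ν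
  refine tendsto_rpow_one_div_of_mul_pow_le ((hφ_nonneg 0 y₀).trans (hφ_le 0 y₀))
    (fun _ => measureReal_nonneg) hA_root (fun n => ?_) fun n => ?_
  · calc ν.real (A n) * b ^ n = ∫ y in A n, ∏ k ∈ Finset.range n, φ k y ∂ν := by
          rw [← smul_eq_mul, ← setIntegral_const]
          refine setIntegral_congr_fun (hA n) fun y hy => ?_
          simp [Finset.prod_congr rfl fun k hk => hφA n y hy k (Finset.mem_range.mp hk)]
      _ ≤ ∫ y, ∏ k ∈ Finset.range n, φ k y ∂ν :=
          setIntegral_le_integral (hint n) (.of_forall (hprod_nonneg n))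
  · calc ∫ y, ∏ k ∈ Finset.range n, φ k y ∂ν ≤ ∫ _, b ^ n ∂ν :=
          integral_mono (hint n) (integrable_const _) (hprod_le n)
      _ = b ^ n := by simp

end Integrals

section Fibers

lemma measureReal_preimage_singleton_of_surjective {G H : Type*} [AddGroup G] [MeasurableSpace G]
    [MeasurableAdd G] [AddGroup H] [Finite H] (μ : Measure G) [IsProbabilityMeasure μ]
    [μ.IsAddLeftInvariant] {φ : G →+ H} (hφ : Function.Surjective φ)
    (hker : MeasurableSet (φ.ker : Set G)) (a : H) :
    μ.real (φ ⁻¹' {a}) = (Nat.card H : ℝ)⁻¹ := by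
  obtain ⟨g, rfl⟩ := hφ a
  have hfiber : φ ⁻¹' {φ g} = (-g + ·) ⁻¹' (φ.ker : Set G) := by
    ext x
    simp only [Set.mem_preimage, Set.mem_singleton_iff, SetLike.mem_coe, AddMonoidHom.mem_ker,
      map_add, map_neg, neg_add_eq_zero]
    exact eq_comm
  have hindex : φ.ker.index = Nat.card H := by
    rw [AddSubgroup.index_ker, AddMonoidHom.range_eq_top.mpr hφ, AddSubgroup.card_top]
  have : φ.ker.FiniteIndex := ⟨hindex ▸ Nat.card_pos.ne'⟩
  have hmul : μ φ.ker * (Nat.card H : ENNReal) = 1 := by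
    rw [mul_comm, ← hindex, φ.ker.index_mul_measure hker μ, measure_univ]
  rw [hfiber, measureReal_def, measure_preimage_add,
    ENNReal.eq_inv_of_mul_eq_one_left hmul, ENNReal.toReal_inv, ENNReal.toReal_natCast]

variable {p : ℕ} [Fact p.Prime]

lemma isLocallyConstant_toZModPow (n : ℕ) :
    IsLocallyConstant (PadicInt.toZModPow n : ℤ_[p] → ZMod (p ^ n)) := by
  refine IsLocallyConstant.iff_eventually_eq _ |>.mpr fun x => ?_
  have hp : (0 : ℝ) < p := Nat.cast_pos.mpr (Fact.out : p.Prime).pos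
  filter_upwards [Metric.ball_mem_nhds x (zpow_pos hp (-(n : ℤ)))] with y hy
  rw [← sub_eq_zero, ← map_sub, ← RingHom.mem_ker, PadicInt.ker_toZModPow,
    ← PadicInt.norm_le_pow_iff_mem_span_pow, ← dist_eq_norm]
  exact (Metric.mem_ball.mp hy).le

lemma measureReal_preimage_toZModPow_singleton [MeasurableSpace ℤ_[p]] [BorelSpace ℤ_[p]]
    (μ : Measure ℤ_[p]) [IsProbabilityMeasure μ] [μ.IsAddLeftInvariant] (n : ℕ)
    (a : ZMod (p ^ n)) :
    μ.real (PadicInt.toZModPow n ⁻¹' {a}) = ((p : ℝ) ^ n)⁻¹ := by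
  have : NeZero (p ^ n) := ⟨pow_ne_zero n (Fact.out : p.Prime).ne_zero⟩
  simpa using measureReal_preimage_singleton_of_surjective μ
    (φ := (PadicInt.toZModPow n).toAddMonoidHom) (ZMod.ringHom_surjective _)
    ((isLocallyConstant_toZModPow n).isOpen_fiber 0).measurableSet a

end Fibers

section BinaryDigits

/-- The `s`-th binary digit of a `2`-adic integer, `true` standing for `1`, read off its residue
modulo `2 ^ (s + 1)`. -/
noncomputable def padicBit (s : ℕ) (x : ℤ_[2]) : Bool :=
  (PadicInt.toZModPow (s + 1) x).val.testBit s

lemma padicBit_add_two_pow (s : ℕ) (x : ℤ_[2]) :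
    padicBit s (x + (2 ^ s : ℕ)) = !padicBit s x := by
  have hlt : 2 ^ s < 2 ^ (s + 1) := Nat.pow_lt_pow_succ one_lt_two
  have hval : (PadicInt.toZModPow (s + 1) ((2 ^ s : ℕ) : ℤ_[2])).val = 2 ^ s := by
    rw [map_natCast, ZMod.val_natCast_of_lt hlt]
  rw [padicBit, padicBit, add_comm x, map_add, ZMod.val_add, hval, Nat.testBit_mod_two_pow,
    Nat.testBit_two_pow_add_eq, decide_eq_true s.lt_succ_self, Bool.true_and]

lemma padicBit_eq_false_of_toZModPow_eq {s k : ℕ} {x : ℤ_[2]}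
    (hx : PadicInt.toZModPow (s + 1) x = k) (hk : k < 2 ^ s) : padicBit s x = false := by
  have hlt : k < 2 ^ (s + 1) := hk.trans (Nat.pow_lt_pow_succ one_lt_two)
  rw [padicBit, hx, ZMod.val_natCast_of_lt hlt, Nat.testBit_lt_two_pow hk]

lemma continuous_padicBit : Continuous fun q : ℕ × ℤ_[2] => padicBit q.1 q.2 :=
  continuous_prod_of_discrete_left.mpr fun s =>
    ((isLocallyConstant_toZModPow (s + 1)).comp fun a => a.val.testBit s).continuous

end BinaryDigits

section Cocycle

/-- The generator of the cocycle over the odometer: at a scale `s` and a phase `y` it is `2` where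
the `s`-th binary digit of `x + y` is `0`, and `1` elsewhere. -/
noncomputable def digitGenerator (q : ℤ_[2] × (ℕ × ℤ_[2])) : ℝ :=
  if padicBit q.2.1 (q.1 + q.2.2) then 1 else 2

lemma digitGenerator_eq_one_or_two (q : ℤ_[2] × (ℕ × ℤ_[2])) :
    digitGenerator q = 1 ∨ digitGenerator q = 2 := by
  unfold digitGenerator
  split_ifs <;> simp

lemma norm_log_digitGenerator_le (q : ℤ_[2] × (ℕ × ℤ_[2])) :
    ‖log (digitGenerator q)‖ ≤ log 2 := by
  have hlog : 0 ≤ log 2 := (log_pos one_lt_two).le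
  rcases digitGenerator_eq_one_or_two q with h | h <;> simp [h, hlog, abs_of_nonneg]

lemma log_digitGenerator_shift_add (x : ℤ_[2]) (s : ℕ) (y : ℤ_[2]) :
    log (digitGenerator (x + (2 ^ s : ℕ), (s, y))) + log (digitGenerator (x, (s, y))) = log 2 := by
  simp only [digitGenerator, add_right_comm x, padicBit_add_two_pow]
  cases padicBit s (x + y) <;> simp

lemma digitGenerator_eq_two_of_toZModPow_eq_neg {s k : ℕ} {x y : ℤ_[2]}
    (hy : PadicInt.toZModPow (s + 1) y = PadicInt.toZModPow (s + 1) (-x)) (hk : k < 2 ^ s) :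
    digitGenerator (k + x, (s, y)) = 2 := by
  have hres : PadicInt.toZModPow (s + 1) ((k : ℤ_[2]) + x + y) = k := by
    simp only [map_add, map_natCast, hy, map_neg, add_neg_cancel_right]
  simp [digitGenerator, padicBit_eq_false_of_toZModPow_eq hres hk]

lemma tendsto_average_log_digitGenerator (x : ℤ_[2]) (q : ℕ × ℤ_[2]) :
    Tendsto (fun n : ℕ =>
        (1 / (n : ℝ)) * ∑ k ∈ Finset.range n, log (digitGenerator (k + x, q)))
      atTop (𝓝 (log 2 / 2)) := by
  have hshift (k : ℕ) : log (digitGenerator ((k + 2 ^ q.1 : ℕ) + x, q)) +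
      log (digitGenerator (k + x, q)) = log 2 := by
    have h := log_digitGenerator_shift_add (k + x) q.1 q.2
    rwa [add_right_comm, ← Nat.cast_add] at h
  simpa only [smul_eq_mul, one_div_mul_eq_div] using
    tendsto_average_of_add_shift_eq
      (a := fun k : ℕ => log (digitGenerator (k + x, q))) (Nat.two_pow_pos q.1) hshift

/-- The scale `s` at which orbit segments of length `n` are resonant; `2 ^ s` lies between `n` and
`2 * n`. -/
def resonantScale (n : ℕ) : ℕ := Nat.log 2 n + 1

lemma lt_two_pow_resonantScale (n : ℕ) : n < 2 ^ resonantScale n :=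
  Nat.lt_pow_succ_log_self one_lt_two n

lemma two_pow_resonantScale_le {n : ℕ} (hn : n ≠ 0) : 2 ^ resonantScale n ≤ 2 * n := by
  rw [resonantScale, pow_succ']
  gcongr
  exact Nat.pow_log_le_self 2 hn

/-- The pairs of scale `resonantScale n` whose phase cancels `x` modulo twice that power of `2`, so
that the orbit segment of `x` of length `n` only meets digits `0`. -/
def resonantSet (x : ℤ_[2]) (n : ℕ) : Set (ℕ × ℤ_[2]) :=
  {resonantScale n} ×ˢ (PadicInt.toZModPow (resonantScale n + 1) ⁻¹'
    {PadicInt.toZModPow (resonantScale n + 1) (-x)})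

lemma digitGenerator_eq_two_of_mem_resonantSet {x : ℤ_[2]} {n k : ℕ} {q : ℕ × ℤ_[2]}
    (hq : q ∈ resonantSet x n) (hk : k < n) : digitGenerator (k + x, q) = 2 := by
  obtain ⟨s, y⟩ := q
  obtain ⟨rfl, hy⟩ := hq
  exact digitGenerator_eq_two_of_toZModPow_eq_neg hy (hk.trans (lt_two_pow_resonantScale n))

variable [MeasurableSpace ℤ_[2]] [BorelSpace ℤ_[2]]

lemma measurable_digitGenerator : Measurable digitGenerator := by
  have hdigit : Continuous fun q : ℤ_[2] × (ℕ × ℤ_[2]) => padicBit q.2.1 (q.1 + q.2.2) :=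
    continuous_padicBit.comp (f := fun q : ℤ_[2] × (ℕ × ℤ_[2]) => (q.2.1, q.1 + q.2.2))
      (by fun_prop)
  exact ((continuous_of_discreteTopology (f := fun d : Bool => if d then (1 : ℝ) else 2)).comp
    hdigit).measurable

lemma measurableSet_resonantSet (x : ℤ_[2]) (n : ℕ) : MeasurableSet (resonantSet x n) :=
  (measurableSet_singleton _).prod
    ((isLocallyConstant_toZModPow (resonantScale n + 1)).isOpen_fiber _).measurableSet

lemma tendsto_integral_sq_average_log_digitGenerator (ν : Measure (ℕ × ℤ_[2])) [IsFiniteMeasure ν]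
    (x : ℤ_[2]) :
    Tendsto (fun n : ℕ =>
        ∫ q, ((1 / (n : ℝ)) * (∑ k ∈ Finset.range n, log (digitGenerator (k + x, q)))
          - log 2 / 2) ^ 2 ∂ν)
      atTop (𝓝 0) := by
  refine tendsto_integral_sq_sub_of_bounded (C := log 2) (fun n => ?_)
    (fun n q => norm_one_div_smul_sum_range_le (fun k => norm_log_digitGenerator_le _) n)
    (.of_forall (tendsto_average_log_digitGenerator x))
  have hterm (k : ℕ) : Measurable fun q : ℕ × ℤ_[2] => log (digitGenerator (k + x, q)) :=
    (measurable_digitGenerator.comp measurable_prodMk_left).log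
  exact ((Finset.measurable_fun_sum _ fun k _ => hterm k).const_mul _).aestronglyMeasurable

/-- The law of the scale and the phase: the scale is geometric with parameter `1 / 2`, and the phase
is independent of it with law `μ`. -/
noncomputable def scalePhaseMeasure (μ : Measure ℤ_[2]) : Measure (ℕ × ℤ_[2]) :=
  (ProbabilityTheory.geometricMeasure ⟨1 / 2, by norm_num, by norm_num⟩).prod μ

instance isProbabilityMeasure_scalePhaseMeasure (μ : Measure ℤ_[2]) [IsProbabilityMeasure μ] :
    IsProbabilityMeasure (scalePhaseMeasure μ) := by
  unfold scalePhaseMeasure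
  infer_instance

variable (μ : Measure ℤ_[2]) [IsProbabilityMeasure μ] [μ.IsAddLeftInvariant]

lemma scalePhaseMeasure_real_resonantSet (x : ℤ_[2]) (n : ℕ) :
    (scalePhaseMeasure μ).real (resonantSet x n) = 1 / (4 * (2 ^ resonantScale n) ^ 2) := by
  rw [scalePhaseMeasure, resonantSet, measureReal_prod_prod,
    ProbabilityTheory.geometricMeasure_real_singleton (by simp [Subtype.ext_iff]),
    measureReal_preimage_toZModPow_singleton]
  rw [Nat.cast_ofNat, sub_half, one_div_pow, pow_succ]
  ring

lemma one_div_le_scalePhaseMeasure_real_resonantSet (x : ℤ_[2]) {n : ℕ} (hn : n ≠ 0) :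
    1 / 16 / (n : ℝ) ^ 2 ≤ (scalePhaseMeasure μ).real (resonantSet x n) := by
  have hscale : (2 : ℝ) ^ resonantScale n ≤ 2 * n := mod_cast two_pow_resonantScale_le hn
  calc 1 / 16 / (n : ℝ) ^ 2 = 1 / (4 * (2 * (n : ℝ)) ^ 2) := by ring
    _ ≤ 1 / (4 * (2 ^ resonantScale n) ^ 2) := by gcongr
    _ = _ := (scalePhaseMeasure_real_resonantSet μ x n).symm

lemma tendsto_integral_prod_sq_digitGenerator_rpow (x : ℤ_[2]) :
    Tendsto (fun n : ℕ =>
        (∫ q, ∏ k ∈ Finset.range n, (digitGenerator (k + x, q)) ^ 2 ∂scalePhaseMeasure μ) ^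
          (1 / (2 * (n : ℝ))))
      atTop (𝓝 2) := by
  have hmass : Tendsto (fun n : ℕ =>
      (scalePhaseMeasure μ).real (resonantSet x n) ^ (1 / (n : ℝ))) atTop (𝓝 1) :=
    tendsto_rpow_one_div_of_div_pow_le (by norm_num) 2
      ((eventually_ne_atTop 0).mono fun _ =>
        one_div_le_scalePhaseMeasure_real_resonantSet μ x)
      (.of_forall fun _ => measureReal_le_one)
  have hgrowth := tendsto_integral_prod_rpow_one_div (b := 4)
    (φ := fun k q => digitGenerator (k + x, q) ^ 2)
    (fun k => (measurable_digitGenerator.comp measurable_prodMk_left).pow_const 2)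
    (fun _ _ => sq_nonneg _)
    (fun k q => by
      rcases digitGenerator_eq_one_or_two (k + x, q) with h | h <;> norm_num [h])
    (measurableSet_resonantSet x)
    (fun n q hq k hk => by norm_num [digitGenerator_eq_two_of_mem_resonantSet hq hk]) hmass
  have hsqrt := hgrowth.sqrt
  rw [show √(4 : ℝ) = 2 by rw [Real.sqrt_eq_iff_mul_self_eq] <;> norm_num] at hsqrt
  refine hsqrt.congr fun n => ?_
  rw [Real.sqrt_eq_rpow, ← Real.rpow_mul
    (integral_nonneg fun q => Finset.prod_nonneg fun k _ => sq_nonneg _)]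
  congr 1
  ring

end Cocycle

/-- the counterexample: there exist standard probability spaces (X,μ), (Y,ν),
an invertible ergodic measure-preserving f : X → X and a measurable {1,2}-valued cocycle
generator g such that for μ-a.e. x: (i) the ergodic averages (1/n)∑ log g(fᵏx,·) converge
in L²(Y,ν) to the constant (log 2)/2, yet (ii) ‖c(n,x)‖₂^{1/n} = (∫ ∏ g² dν)^{1/2n} → 2. -/
theorem abelian_MET_growth_rate_counterexample :
    ∃ (X : Type) (mX : MeasurableSpace X) (Y : Type) (mY : MeasurableSpace Y)
      (μ : Measure X) (ν : Measure Y) (f : X → X) (g : X × Y → ℝ),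
      StandardBorelSpace X ∧ StandardBorelSpace Y ∧
      IsProbabilityMeasure μ ∧ IsProbabilityMeasure ν ∧
      Function.Bijective f ∧ Ergodic f μ ∧
      Measurable g ∧ (∀ p : X × Y, g p = 1 ∨ g p = 2) ∧
      (∀ᵐ x ∂μ,
        Tendsto (fun n : ℕ =>
            ∫ y, ((1 / (n : ℝ)) * (∑ k ∈ Finset.range n, Real.log (g (f^[k] x, y)))
              - Real.log 2 / 2) ^ 2 ∂ν) atTop (𝓝 0) ∧
        Tendsto (fun n : ℕ =>
            (∫ y, ∏ k ∈ Finset.range n, (g (f^[k] x, y)) ^ 2 ∂ν) ^ (1 / (2 * (n : ℝ))))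
          atTop (𝓝 2)) := by
  borelize ℤ_[2]
  let K : TopologicalSpace.PositiveCompacts ℤ_[2] := ⊤
  let μ : Measure ℤ_[2] := Measure.addHaarMeasure K
  have hμ : IsProbabilityMeasure μ :=
    ⟨by simpa [K] using Measure.addHaarMeasure_self (K₀ := K)⟩
  have hergodic : Ergodic (1 + · : ℤ_[2] → ℤ_[2]) μ :=
    ergodic_add_left_of_denseRange_nsmul (by simpa using PadicInt.denseRange_natCast (p := 2)) μ
  have hiterate (k : ℕ) (x : ℤ_[2]) : (1 + ·)^[k] x = k + x := by simp
  refine ⟨ℤ_[2], inferInstance, ℕ × ℤ_[2], inferInstance, μ, scalePhaseMeasure μ, (1 + ·),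
    digitGenerator, inferInstance, inferInstance, hμ, inferInstance, (Equiv.addLeft 1).bijective,
    hergodic, measurable_digitGenerator, digitGenerator_eq_one_or_two, .of_forall fun x => ?_⟩
  simp only [hiterate]
  exact ⟨tendsto_integral_sq_average_log_digitGenerator (scalePhaseMeasure μ) x,
    tendsto_integral_prod_sq_digitGenerator_rpow μ x⟩
end

section
/- Let H be a complex Hilbert space and M ⊆ B(H) a von Neumann algebra which is diffuse, meaning: for every projection p ∈ M with p ≠ 0 there exists a projection q ∈ M with q ≤ p (i.e. q p = q), q ≠ 0 and q ≠ p. Then M contains no nonzero compact operator: if x ∈ M is a compact operator on H, then x = 0. -/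
/-!
If `x ∈ M` is compact and nonzero, then `star x * x ∈ M` is compact, self-adjoint and nonzero, so it
has a nonzero eigenvalue, whose eigenspace is finite-dimensional. This eigenspace is invariant under
the commutant of `M`, so its orthogonal projection belongs to `M`. A nonzero projection in `M` of
least finite rank has no proper nonzero subprojection in `M`, which diffuseness forbids.
-/

section StarProjection

variable {𝕜 E : Type*} [RCLike 𝕜] [NormedAddCommGroup E] [InnerProductSpace 𝕜 E] [CompleteSpace E]
  {p q : E →L[𝕜] E}

theorem range_le_range_of_isSelfAdjoint_of_mul_eq_left (hq : IsSelfAdjoint q)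
    (hp : IsSelfAdjoint p) (hqp : q * p = q) : q.range ≤ p.range := by
  have hpq : p * q = q := by
    simpa only [star_mul, hp.star_eq, hq.star_eq] using congr(star $hqp)
  rintro _ ⟨v, rfl⟩
  exact ⟨q v, congr($hpq v)⟩

theorem range_lt_range_of_isStarProjection_of_mul_eq_left (hq : IsStarProjection q)
    (hp : IsStarProjection p) (hqp : q * p = q) (hne : q ≠ p) : q.range < p.range :=
  lt_of_le_of_ne
    (range_le_range_of_isSelfAdjoint_of_mul_eq_left hq.isSelfAdjoint hp.isSelfAdjoint hqp)
    (mt (ContinuousLinearMap.IsStarProjection.ext_iff hq hp).mpr hne)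

end StarProjection

section VonNeumannAlgebra

open Module.End

variable {H : Type*} [NormedAddCommGroup H] [InnerProductSpace ℂ H] [CompleteSpace H]
  {M : VonNeumannAlgebra H} {x : H →L[ℂ] H}

theorem starProjection_eigenspace_mem_vonNeumannAlgebra (hx : x ∈ M) (μ : ℂ)
    [(eigenspace (x : H →ₗ[ℂ] H) μ).HasOrthogonalProjection] :
    (eigenspace (x : H →ₗ[ℂ] H) μ).starProjection ∈ M := by
  rw [VonNeumannAlgebra.IsStarProjection.mem_iff isStarProjection_starProjection]
  intro y hy
  have hxy : Commute (x : H →ₗ[ℂ] H) y :=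
    congr(($(VonNeumannAlgebra.mem_commutant_iff.mp hy x hx) : H →ₗ[ℂ] H))
  rw [Submodule.range_starProjection]
  exact mapsTo_genEigenspace_of_comm hxy μ 1

theorem exists_finiteDimensional_range_isStarProjection_mem_vonNeumannAlgebra (hx : x ∈ M)
    (hcx : IsCompactOperator x) (hx0 : x ≠ 0) :
    ∃ p ∈ M, IsStarProjection p ∧ p ≠ 0 ∧ FiniteDimensional ℂ p.range := by
  have hcompact : IsCompactOperator (star x * x) := hcx.clm_comp (star x)
  have hsymm : (star x * x).IsSymmetric := (IsSelfAdjoint.star_mul_self x).isSymmetric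
  have hne : star x * x ≠ 0 := CStarRing.star_mul_self_ne_zero_iff x |>.mpr hx0
  obtain ⟨μ, hμ, hμ0⟩ :
      ∃ μ, HasEigenvalue ((star x * x : H →L[ℂ] H) : H →ₗ[ℂ] H) μ ∧ μ ≠ 0 := by
    contrapose! hne
    exact (ContinuousLinearMap.eq_zero_of_forall_hasEigenvalue_eq_zero hcompact hsymm).mp hne
  have hfin := ContinuousLinearMap.finite_dimensional_eigenspace hcompact μ hμ0
  refine ⟨(eigenspace ((star x * x : H →L[ℂ] H) : H →ₗ[ℂ] H) μ).starProjection,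
    starProjection_eigenspace_mem_vonNeumannAlgebra (mul_mem (star_mem hx) hx) μ,
    isStarProjection_starProjection, ?_, ?_⟩
  · rw [← Submodule.starProjection_bot, Ne, Submodule.starProjection_inj]
    exact hμ
  · rwa [Submodule.range_starProjection]

end VonNeumannAlgebra

theorem diffuse_vonNeumannAlgebra_no_compact_general
    {H : Type*} [NormedAddCommGroup H] [InnerProductSpace ℂ H] [CompleteSpace H]
    (M : VonNeumannAlgebra H)
    (hdiffuse : ∀ p ∈ M, IsStarProjection p → FiniteDimensional ℂ p.range → p ≠ 0 →
      ∃ q ∈ M, IsStarProjection q ∧ q * p = q ∧ q ≠ 0 ∧ q ≠ p)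
    (x : H →L[ℂ] H) (hx : x ∈ M) (hcx : IsCompactOperator x) :
    x = 0 := by
  by_contra hx0
  obtain ⟨p, ⟨hpM, hp, hp0, hpfin⟩, hpmin⟩ := exists_minimalFor_of_wellFoundedLT _
    (fun p : H →L[ℂ] H ↦ Module.finrank ℂ p.range)
    (exists_finiteDimensional_range_isStarProjection_mem_vonNeumannAlgebra hx hcx hx0)
  obtain ⟨q, hqM, hq, hqp, hq0, hne⟩ := hdiffuse p hpM hp hpfin hp0
  have hlt : q.range < p.range := range_lt_range_of_isStarProjection_of_mul_eq_left hq hp hqp hne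
  have hrank : Module.finrank ℂ q.range < Module.finrank ℂ p.range :=
    Submodule.finrank_lt_finrank_of_lt hlt
  have hqfin : FiniteDimensional ℂ q.range := Submodule.finiteDimensional_of_le hlt.le
  exact hrank.not_ge (hpmin ⟨hqM, hq, hq0, hqfin⟩ hrank.le)

/-- a diffuse von Neumann algebra contains no nonzero compact operator. -/
theorem diffuse_vonNeumannAlgebra_no_compact
    {H : Type*} [NormedAddCommGroup H] [InnerProductSpace ℂ H] [CompleteSpace H]
    (M : VonNeumannAlgebra H)
    (hdiffuse : ∀ p : H →L[ℂ] H, p ∈ M → IsSelfAdjoint p → p * p = p → p ≠ 0 →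
      ∃ q : H →L[ℂ] H, q ∈ M ∧ IsSelfAdjoint q ∧ q * q = q ∧ q * p = q ∧ q ≠ 0 ∧ q ≠ p)
    (x : H →L[ℂ] H) (hx : x ∈ M) (hcx : IsCompactOperator (x : H → H)) :
    x = 0 := by
  refine diffuse_vonNeumannAlgebra_no_compact_general M (fun p hpM hp _ hp0 ↦ ?_) x hx hcx
  obtain ⟨q, hqM, hqsa, hqq, hq⟩ := hdiffuse p hpM hp.isSelfAdjoint hp.isIdempotentElem hp0
  exact ⟨q, hqM, ⟨hqq, hqsa⟩, hq⟩
end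

section
/- Let G be a group and (g_n)_{n∈ℕ} a sequence of pairwise distinct elements of G. Then the left translation operators λ(g_n) on ℓ²(G), defined by (λ(g)ξ)(h) = ξ(g⁻¹h), converge to 0 in the weak operator topology: for all ξ, η ∈ ℓ²(G;ℂ), the inner products ⟨λ(g_n)ξ, η⟩ = ∑_{h∈G} conj(η(h)) ξ(g_n⁻¹ h) tend to 0 as n → ∞. -/
open Filter Topology

/-!
The translates `λ(g)ξ` all have norm at most `‖ξ‖`, and each of their coordinates `ξ (g⁻¹ * h)`
tends to `0` as `g` leaves every finite subset of `G`, because a square-summable function vanishes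
at infinity. In `ℓ²`, bounded coordinatewise convergence implies weak convergence: the vectors `η`
against which the inner products converge form a closed set containing all finite sums of
one-coordinate vectors.
-/

open scoped ENNReal

section WeakConvergence

variable {𝕜 ι : Type*} [RCLike 𝕜] {C : ℝ}

theorem isClosed_setOf_tendsto_inner {H : Type*} [SeminormedAddCommGroup H] [InnerProductSpace 𝕜 H]
    {u : ι → H} (hu : ∀ i, ‖u i‖ ≤ C) (l : Filter ι) (v : H) :
    IsClosed {w : H | Tendsto (fun i => inner 𝕜 w (u i)) l (𝓝 (inner 𝕜 w v))} := by
  have lipschitz_inner : ∀ i, LipschitzWith C.toNNReal fun w : H => inner 𝕜 w (u i) := fun i =>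
    LipschitzWith.of_dist_le_mul fun w w' => by
      calc dist (inner 𝕜 w (u i)) (inner 𝕜 w' (u i)) = ‖inner 𝕜 (w - w') (u i)‖ := by
            rw [dist_eq_norm, inner_sub_left]
        _ ≤ ‖w - w'‖ * ‖u i‖ := norm_inner_le_norm _ _
        _ ≤ C.toNNReal * dist w w' := by
            rw [mul_comm, dist_eq_norm]
            gcongr
            exact (hu i).trans C.le_coe_toNNReal
  exact (LipschitzWith.uniformEquicontinuous _ _ lipschitz_inner).equicontinuous
    |>.isClosed_setOfPred_tendsto (by fun_prop)

theorem tendsto_inner_lp_of_tendsto_apply {l : Filter ι} {X : Type*} {E : X → Type*}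
    [∀ x, NormedAddCommGroup (E x)] [∀ x, InnerProductSpace 𝕜 (E x)] {u : ι → lp E 2} {v : lp E 2}
    (hu : ∀ i, ‖u i‖ ≤ C) (huv : ∀ x, Tendsto (fun i => u i x) l (𝓝 (v x))) (w : lp E 2) :
    Tendsto (fun i => inner 𝕜 w (u i)) l (𝓝 (inner 𝕜 w v)) := by
  classical
  have tendsto_finite_sum (s : Finset X) :
      Tendsto (fun i => inner 𝕜 (∑ x ∈ s, lp.single 2 x (w x)) (u i)) l
        (𝓝 (inner 𝕜 (∑ x ∈ s, lp.single 2 x (w x)) v)) := by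
    simp only [sum_inner, lp.inner_single_left]
    exact tendsto_finsetSum s fun x _ => tendsto_const_nhds.inner (huv x)
  exact (isClosed_setOf_tendsto_inner hu l v).mem_of_tendsto
    (lp.hasSum_single ENNReal.ofNat_ne_top w) (Eventually.of_forall tendsto_finite_sum)

end WeakConvergence

section Pullback

variable {X Y E : Type*} [NormedAddCommGroup E] {p : ℝ≥0∞}

theorem memℓp_comp_of_injective {f : Y → E} (hf : Memℓp f p) {σ : X → Y}
    (hσ : Function.Injective σ) : Memℓp (fun x => f (σ x)) p := by
  rcases p.trichotomy with rfl | rfl | hp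
  · exact memℓp_zero (hf.finite_dsupport.preimage hσ.injOn)
  · exact memℓp_infty (hf.bddAbove.mono (Set.range_comp_subset_range σ fun y => ‖f y‖))
  · exact memℓp_gen ((hf.summable hp).comp_injective hσ)

theorem tendsto_cofinite_zero_of_memℓp {f : Y → E} (hf : Memℓp f p) (hp : p ≠ ∞) :
    Tendsto f cofinite (𝓝 0) := by
  rcases p.trichotomy with rfl | rfl | hp_pos
  · exact tendsto_nhds_of_eventually_eq (hf.finite_dsupport.subset fun _ => id)
  · exact absurd rfl hp
  · rw [tendsto_zero_iff_norm_tendsto_zero]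
    have tendsto_root := (hf.summable hp_pos).tendsto_cofinite_zero.rpow_const
      (p := p.toReal⁻¹) (Or.inr (inv_nonneg.mpr hp_pos.le))
    simpa only [Real.rpow_rpow_inv (norm_nonneg _) hp_pos.ne',
      Real.zero_rpow (inv_ne_zero hp_pos.ne')] using tendsto_root

/-- The pullback `ξ ∘ σ` of an `ℓᵖ` function along an injection `σ`. The translation operator `λ(g)`
is the pullback along `h ↦ g⁻¹ * h`. -/
def lpPullback (σ : X → Y) (hσ : Function.Injective σ) (ξ : lp (fun _ : Y => E) p) :
    lp (fun _ : X => E) p :=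
  ⟨fun x => ξ (σ x), memℓp_comp_of_injective (lp.memℓp ξ) hσ⟩

theorem norm_lpPullback_le (σ : X → Y) (hσ : Function.Injective σ) (ξ : lp (fun _ : Y => E) p) :
    ‖lpPullback σ hσ ξ‖ ≤ ‖ξ‖ := by
  rcases p.trichotomy with rfl | rfl | hp
  · rw [lp.norm_eq_card_dsupport, lp.norm_eq_card_dsupport, Nat.cast_le]
    exact Finset.card_le_card_of_injOn σ (by simp [lpPullback, Set.MapsTo]) hσ.injOn
  · exact lp.norm_le_of_forall_le (norm_nonneg ξ) fun x =>
      lp.norm_apply_le_norm ENNReal.top_ne_zero ξ (σ x)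
  · refine lp.norm_le_of_tsum_le hp (lp.norm_nonneg' ξ) ?_
    rw [lp.norm_rpow_eq_tsum hp]
    exact tsum_comp_le_tsum_of_inj ((lp.memℓp ξ).summable hp) (fun _ => by positivity) hσ

end Pullback

section MatrixCoefficients

variable {𝕜 E : Type*} [RCLike 𝕜] [NormedAddCommGroup E] [InnerProductSpace 𝕜 E]

theorem tendsto_tsum_inner_comp_zero {X Y ι : Type*} {l : Filter ι} {σ : ι → X → Y}
    (hσ : ∀ i, Function.Injective (σ i)) (hσ_cofinite : ∀ x, Tendsto (fun i => σ i x) l cofinite)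
    (ξ : lp (fun _ : Y => E) 2) (η : lp (fun _ : X => E) 2) :
    Tendsto (fun i => ∑' x, inner 𝕜 (η x) (ξ (σ i x))) l (𝓝 0) := by
  have tendsto_apply (x : X) : Tendsto (fun i => lpPullback (σ i) (hσ i) ξ x) l (𝓝 0) :=
    (tendsto_cofinite_zero_of_memℓp (lp.memℓp ξ) ENNReal.ofNat_ne_top).comp (hσ_cofinite x)
  have tendsto_inner := tendsto_inner_lp_of_tendsto_apply (𝕜 := 𝕜) (v := 0)
    (fun i => norm_lpPullback_le (σ i) (hσ i) ξ) tendsto_apply η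
  rwa [inner_zero_right] at tendsto_inner

theorem leftTranslation_tendsto_zero_WOT_general {G : Type*} [Group G]
    (ξ η : lp (fun _ : G => E) 2) :
    Tendsto (fun g : G => ∑' h : G, inner 𝕜 (η h) (ξ (g⁻¹ * h))) cofinite (𝓝 0) :=
  tendsto_tsum_inner_comp_zero (fun g => mul_right_injective g⁻¹)
    (fun h => ((mul_left_injective h).comp inv_injective).tendsto_cofinite) ξ η

end MatrixCoefficients

/-- for a sequence of pairwise distinct group elements g_n, the left
translation operators λ(g_n) on ℓ²(G) tend to 0 in the weak operator topology:
⟨λ(g_n)ξ, η⟩ = ∑_h conj(η h) · ξ(g_n⁻¹ h) → 0 for all ξ, η ∈ ℓ²(G;ℂ). -/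
theorem leftTranslation_tendsto_zero_WOT
    {G : Type*} [Group G] (g : ℕ → G) (hg : Function.Injective g)
    (ξ η : lp (fun _ : G => ℂ) 2) :
    Tendsto (fun n : ℕ => ∑' h : G, (starRingEnd ℂ) (η h) * ξ ((g n)⁻¹ * h))
      atTop (𝓝 0) := by
  simpa only [RCLike.inner_apply', Function.comp_def, Nat.cofinite_eq_atTop] using
    (leftTranslation_tendsto_zero_WOT_general (𝕜 := ℂ) ξ η).comp hg.tendsto_cofinite
end
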